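/- arXiv:2404.08289 — 4 statements merged into one kernel-verified Lean document; each statement's English description precedes it below -/
import Mathlib

section
/- Let d, n ≥ 1. A map V : (Fin n → ℝ^d) → (Fin n → ℝ^d) is permutation-equivariant if and only if there exists a function f : ℝ^d → Multiset(ℝ^d) → ℝ^d such that for every x ∈ (Fin n → ℝ^d) and every i ∈ Fin n, V(x)(i) = f(x(i), {{x(1), …, x(n)}}), where {{x(1), …, x(n)}} denotes the multiset of values of x. (Permutation-equivariant vector fields on (ℝ^d)^n are exactly those of the form x_i ↦ f(x_i, μ) with μ the empirical measure of the configuration.) -/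
/-- Two finite families with the same multiset of values differ by a permutation of the indices. -/
theorem exists_perm_eq_comp_of_map_univ_val_eq {ι α : Type*} [Fintype ι] {x y : ι → α}
    (h : Finset.univ.val.map x = Finset.univ.val.map y) :
    ∃ σ : Equiv.Perm ι, x = y ∘ σ := by
  classical
  have fiber_card (c : α) : Fintype.card {i // x i = c} = Fintype.card {i // y i = c} := by
    have hc := congrArg (Multiset.count c) h
    simp only [Multiset.count_map, eq_comm (a := c)] at hc
    simpa only [Fintype.card_subtype, Finset.card_def, Finset.filter_val] using hc
  let e (c : α) : {i // x i = c} ≃ {i // y i = c} := Fintype.equivOfCardEq (fiber_card c)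
  exact ⟨Equiv.ofFiberEquiv e, funext fun i => (Equiv.ofFiberEquiv_map e i).symm⟩

/-- A permutation-equivariant map takes equal values at indices where its argument does. -/
theorem apply_eq_of_perm_equivariant {ι α β : Type*} {V : (ι → α) → ι → β}
    (hV : ∀ (σ : Equiv.Perm ι) (x : ι → α), V (x ∘ σ) = V x ∘ σ)
    {x : ι → α} {i j : ι} (h : x i = x j) : V x i = V x j := by
  classical
  have hx : x ∘ Equiv.swap i j = x := by
    rw [Equiv.comp_swap_eq_update, h, Function.update_eq_self, ← h, Function.update_eq_self]
  simpa [hx] using congrFun (hV (Equiv.swap i j) x) i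

/-- Permutation-equivariant vector fields on `(ℝ^d)^n` are exactly those of the
form `xᵢ ↦ f (xᵢ, μ)` where `μ` is the empirical measure (multiset of values)
of the configuration. -/
theorem permutation_equivariant_iff_function_of_empirical_measure
    (d n : ℕ) (hd : 1 ≤ d) (hn : 1 ≤ n)
    (V : (Fin n → EuclideanSpace ℝ (Fin d)) → (Fin n → EuclideanSpace ℝ (Fin d))) :
    (∀ (σ : Equiv.Perm (Fin n)) (x : Fin n → EuclideanSpace ℝ (Fin d)),
        V (x ∘ σ) = (V x) ∘ σ) ↔
    (∃ f : EuclideanSpace ℝ (Fin d) → Multiset (EuclideanSpace ℝ (Fin d)) →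
        EuclideanSpace ℝ (Fin d),
      ∀ (x : Fin n → EuclideanSpace ℝ (Fin d)) (i : Fin n),
        V x i = f (x i) (Finset.univ.val.map x)) := by
  classical
  constructor
  · intro hV
    let f (a : EuclideanSpace ℝ (Fin d)) (s : Multiset (EuclideanSpace ℝ (Fin d))) :
        EuclideanSpace ℝ (Fin d) :=
      if h : ∃ (y : Fin n → EuclideanSpace ℝ (Fin d)) (j : Fin n),
          y j = a ∧ Finset.univ.val.map y = s then
        V h.choose h.choose_spec.choose
      else 0
    refine ⟨f, fun x i => ?_⟩
    have h : ∃ (y : Fin n → EuclideanSpace ℝ (Fin d)) (j : Fin n),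
        y j = x i ∧ Finset.univ.val.map y = Finset.univ.val.map x := ⟨x, i, rfl, rfl⟩
    simp only [f, dif_pos h]
    obtain ⟨hj, hy⟩ := h.choose_spec.choose_spec
    generalize h.choose_spec.choose = j at hj ⊢
    generalize h.choose = y at hj hy ⊢
    obtain ⟨σ, rfl⟩ := exists_perm_eq_comp_of_map_univ_val_eq hy.symm
    rw [hV]
    exact apply_eq_of_perm_equivariant hV hj.symm
  · rintro ⟨f, hf⟩ σ x
    funext i
    have hx : Finset.univ.val.map (x ∘ σ) = Finset.univ.val.map x := by
      rw [← Multiset.map_map, Multiset.map_univ_val_equiv]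
    rw [Function.comp_apply, hf, hf, hx, Function.comp_apply]
end

section
/- Let α be a type, n ≥ 1, and x, y : Fin n → α. The stabilizer subgroups of x and of y for the action of Perm(Fin n) on (Fin n → α) are conjugate in Perm(Fin n) if and only if there exists a permutation σ of Fin n such that for all i, j ∈ Fin n, x(i) = x(j) ⟺ y(σ(i)) = y(σ(j)). (Two configurations have conjugate isotropy groups exactly when their coincidence patterns match, i.e., the sizes of their packets of equal coordinates agree.) -/
/-- The stabilizer, in `Equiv.Perm (Fin n)`, of a tuple `x : Fin n → α` under the
action `σ · x = x ∘ σ⁻¹`. -/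
def tupleStabilizer {α : Type*} {n : ℕ} (x : Fin n → α) : Subgroup (Equiv.Perm (Fin n)) where
  carrier := {σ | x ∘ ⇑σ⁻¹ = x}
  one_mem' := by ext i; simp
  mul_mem' := by
    intro σ τ hσ hτ
    have hσ' : ∀ i, x (σ⁻¹ i) = x i := fun i => congrFun hσ i
    have hτ' : ∀ i, x (τ⁻¹ i) = x i := fun i => congrFun hτ i
    ext i
    simp only [Function.comp_apply, mul_inv_rev, Equiv.Perm.coe_mul]
    rw [hτ', hσ']
  inv_mem' := by
    intro σ hσ
    have hσ' : ∀ i, x (σ⁻¹ i) = x i := fun i => congrFun hσ i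
    ext i
    have := hσ' (σ i)
    simpa using this.symm

theorem mem_tupleStabilizer_iff {α : Type*} {n : ℕ} (x : Fin n → α) (σ : Equiv.Perm (Fin n)) :
    σ ∈ tupleStabilizer x ↔ ∀ i, x (σ i) = x i := by
  rw [← inv_mem_iff]
  change x ∘ ⇑(σ⁻¹)⁻¹ = x ↔ _
  rw [inv_inv, funext_iff]
  rfl

theorem swap_mem_tupleStabilizer_iff {α : Type*} {n : ℕ} (x : Fin n → α) (i j : Fin n) :
    Equiv.swap i j ∈ tupleStabilizer x ↔ x i = x j := by
  rw [mem_tupleStabilizer_iff]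
  refine ⟨fun h => by simpa using h j, fun h k => ?_⟩
  rw [Equiv.swap_apply_def]
  split_ifs with hi hj
  · rw [hi, h]
  · rw [hj, h]
  · rfl

/-- Two configurations have conjugate isotropy groups for the permutation action
exactly when their coincidence patterns match. -/
theorem stabilizers_conjugate_iff_coincidence_patterns_match
    {α : Type*} (n : ℕ) (hn : 1 ≤ n) (x y : Fin n → α) :
    (∃ g : Equiv.Perm (Fin n), ∀ σ : Equiv.Perm (Fin n),
        σ ∈ tupleStabilizer y ↔ g⁻¹ * σ * g ∈ tupleStabilizer x) ↔
    (∃ σ : Equiv.Perm (Fin n), ∀ i j : Fin n, x i = x j ↔ y (σ i) = y (σ j)) := by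
  constructor
  · rintro ⟨g, hg⟩
    refine ⟨g, fun i j => ?_⟩
    have hconj : g⁻¹ * Equiv.swap (g i) (g j) * g = Equiv.swap i j := by
      rw [Equiv.swap_apply_apply]
      group
    rw [← swap_mem_tupleStabilizer_iff x, ← swap_mem_tupleStabilizer_iff y, hg, hconj]
  · rintro ⟨g, hg⟩
    refine ⟨g, fun σ => ?_⟩
    rw [mem_tupleStabilizer_iff, mem_tupleStabilizer_iff, ← g.forall_congr_right]
    refine forall_congr' fun i => ?_
    simp [hg]
end

section
/- Let n ≥ 1 and let S denote the real vector space of symmetric n × n real matrices. Let X : S → S be a Lipschitz vector field that is O(n)-equivariant: X(P A Pᵀ) = P X(A) Pᵀ for every orthogonal P and every A ∈ S. Let A : ℝ → S satisfy A'(t) = X(A(t)) for all t ∈ ℝ, and for B ∈ S let λ₁(B) ≤ λ₂(B) ≤ … ≤ λₙ(B) be the nondecreasing enumeration of the eigenvalues of B with multiplicity. Then the ordered multiplicities are preserved along the evolution: for all t ∈ ℝ and all indices i, j, λᵢ(A(t)) = λⱼ(A(t)) if and only if λᵢ(A(0)) = λⱼ(A(0)). -/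
open Matrix Polynomial

attribute [local instance] Matrix.normedAddCommGroup Matrix.normedSpace

/-- The real vector space (submodule) of symmetric `n × n` real matrices. -/
def symmetricMatrices (n : ℕ) : Submodule ℝ (Matrix (Fin n) (Fin n) ℝ) where
  carrier := {A | A.IsSymm}
  add_mem' := fun {A B} hA hB => by
    simp only [Set.mem_setOf_eq, Matrix.IsSymm] at *
    rw [Matrix.transpose_add, hA, hB]
  zero_mem' := by simp [Matrix.IsSymm]
  smul_mem' := fun c A hA => by
    simp only [Set.mem_setOf_eq, Matrix.IsSymm] at *
    rw [Matrix.transpose_smul, hA]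

/-- Conjugation `A ↦ P A Pᵀ` as a continuous linear map on symmetric matrices. -/
noncomputable def symmetricConj {n : ℕ} (P : Matrix (Fin n) (Fin n) ℝ) :
    symmetricMatrices n →L[ℝ] symmetricMatrices n :=
  LinearMap.toContinuousLinearMap
    { toFun := fun A => ⟨P * A * Pᵀ, by
        have hA : (A : Matrix (Fin n) (Fin n) ℝ)ᵀ = A := A.2
        change (P * A.1 * Pᵀ)ᵀ = P * A.1 * Pᵀ
        simp [Matrix.transpose_mul, hA, Matrix.mul_assoc]⟩
      map_add' := fun A B => Subtype.ext <| by simp [Matrix.mul_add, Matrix.add_mul]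
      map_smul' := fun c A => Subtype.ext <| by simp }

@[simp]
theorem coe_symmetricConj {n : ℕ} (P : Matrix (Fin n) (Fin n) ℝ) (A : symmetricMatrices n) :
    (symmetricConj P A : Matrix (Fin n) (Fin n) ℝ) = P * A * Pᵀ :=
  rfl

/-- Conjugating an integral curve of an equivariant vector field gives an integral curve. -/
theorem hasDerivAt_symmetricConj {n : ℕ} {X : symmetricMatrices n → symmetricMatrices n}
    {P : Matrix (Fin n) (Fin n) ℝ}
    (hP : ∀ A, X (symmetricConj P A) = symmetricConj P (X A))
    {A : ℝ → symmetricMatrices n} (hA : ∀ t, HasDerivAt A (X (A t)) t) (t : ℝ) :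
    HasDerivAt (fun t => symmetricConj P (A t)) (X (symmetricConj P (A t))) t := by
  rw [hP]
  exact (symmetricConj P).hasFDerivAt.comp_hasDerivAt t (hA t)

/-- An orthogonal symmetry of one point of an integral curve is a symmetry of the whole curve. -/
theorem symmetricConj_eq_of_symmetricConj_eq {n : ℕ}
    {X : symmetricMatrices n → symmetricMatrices n} {K : NNReal} (hX : LipschitzWith K X)
    {P : Matrix (Fin n) (Fin n) ℝ}
    (hP : ∀ A, X (symmetricConj P A) = symmetricConj P (X A))
    {A : ℝ → symmetricMatrices n} (hA : ∀ t, HasDerivAt A (X (A t)) t) {s : ℝ}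
    (hs : symmetricConj P (A s) = A s) (t : ℝ) : symmetricConj P (A t) = A t :=
  congrFun (ODE_solution_unique_univ (v := fun _ => X) (s := fun _ => Set.univ) (t₀ := s)
    (fun _ => hX.lipschitzOnWith) (fun t => ⟨hasDerivAt_symmetricConj hP hA t, trivial⟩)
    (fun t => ⟨hA t, trivial⟩) hs) t

theorem Monotone.eq_of_prod_X_sub_C_eq {n : ℕ} {f g : Fin n → ℝ} (hf : Monotone f)
    (hg : Monotone g)
    (h : ∏ i, (Polynomial.X - Polynomial.C (f i)) = ∏ i, (Polynomial.X - Polynomial.C (g i))) :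
    f = g := by
  have key (u : Fin n → ℝ) : (∏ i, (Polynomial.X - Polynomial.C (u i))).roots =
      (List.ofFn u : Multiset ℝ) := by
    rw [← Polynomial.roots_multiset_prod_X_sub_C (List.ofFn u : Multiset ℝ)]
    simp [List.prod_ofFn, List.map_ofFn]
  have hp : (List.ofFn f).Perm (List.ofFn g) := by
    rw [← Multiset.coe_eq_coe, ← key, ← key, h]
  exact List.ofFn_injective (hp.eq_of_sortedLE hf.sortedLE_ofFn hg.sortedLE_ofFn)

/-- Two continuous real functions that coincide either everywhere or nowhere keep their order. -/
theorem le_of_forall_eq_imp_eq {f g : ℝ → ℝ} (hf : Continuous f) (hg : Continuous g)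
    (h : ∀ s t, f s = g s → f t = g t) {s : ℝ} (hs : f s ≤ g s) (t : ℝ) : f t ≤ g t := by
  by_contra! ht
  obtain ⟨r, hr⟩ := mem_range_of_exists_le_of_exists_ge (hf.sub hg) (c := 0)
    ⟨s, sub_nonpos.2 hs⟩ ⟨t, sub_nonneg.2 ht.le⟩
  exact ht.ne' (h r t (sub_eq_zero.1 hr))

/-- The reflection in the `i`-th coordinate hyperplane. -/
def signMatrix {n : ℕ} (i : Fin n) : Matrix (Fin n) (Fin n) ℝ :=
  Matrix.diagonal fun k => if k = i then -1 else 1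

theorem signMatrix_mul_transpose {n : ℕ} (i : Fin n) :
    signMatrix i * (signMatrix i)ᵀ = 1 := by
  rw [signMatrix, Matrix.diagonal_transpose, Matrix.diagonal_mul_diagonal,
    ← Matrix.diagonal_one]
  congr 1
  ext k
  split_ifs <;> norm_num

/-- A symmetric matrix is diagonal iff it is fixed by all coordinate reflections. -/
theorem isDiag_iff_forall_symmetricConj_signMatrix {n : ℕ} (A : symmetricMatrices n) :
    (A : Matrix (Fin n) (Fin n) ℝ).IsDiag ↔ ∀ i, symmetricConj (signMatrix i) A = A := by
  constructor
  · intro h i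
    ext j k
    rw [coe_symmetricConj, signMatrix, Matrix.diagonal_transpose, Matrix.mul_diagonal,
      Matrix.diagonal_mul]
    by_cases hjk : j = k
    · subst hjk
      split_ifs <;> ring
    · simp [h hjk]
  · intro h j k hjk
    have := congrArg (fun B : symmetricMatrices n => (B : Matrix (Fin n) (Fin n) ℝ) j k) (h j)
    simp only [coe_symmetricConj, signMatrix, Matrix.diagonal_transpose, Matrix.mul_diagonal,
      Matrix.diagonal_mul, if_true, if_neg (Ne.symm hjk)] at this
    linarith

theorem permMatrix_mul_transpose {n : ℕ} (σ : Equiv.Perm (Fin n)) :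
    σ.permMatrix ℝ * (σ.permMatrix ℝ)ᵀ = 1 := by
  rw [Matrix.transpose_permMatrix, ← Matrix.permMatrix_mul]
  simp

theorem coe_symmetricConj_permMatrix {n : ℕ} (σ : Equiv.Perm (Fin n))
    (A : symmetricMatrices n) :
    (symmetricConj (σ.permMatrix ℝ) A : Matrix (Fin n) (Fin n) ℝ) =
      (A : Matrix (Fin n) (Fin n) ℝ).submatrix σ σ := by
  rw [coe_symmetricConj, Matrix.transpose_permMatrix, Equiv.Perm.permMatrix, Equiv.Perm.permMatrix,
    PEquiv.toMatrix_toPEquiv_mul, PEquiv.mul_toMatrix_toPEquiv]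
  rfl

/-- Two diagonal entries of a diagonal matrix agree iff swapping the indices fixes the matrix. -/
theorem apply_eq_apply_iff_symmetricConj_swap {n : ℕ} {A : symmetricMatrices n}
    (hA : (A : Matrix (Fin n) (Fin n) ℝ).IsDiag) (i j : Fin n) :
    (A : Matrix (Fin n) (Fin n) ℝ) i i = (A : Matrix (Fin n) (Fin n) ℝ) j j ↔
      symmetricConj ((Equiv.swap i j).permMatrix ℝ) A = A := by
  rw [← Subtype.coe_inj, coe_symmetricConj_permMatrix]
  constructor
  · intro h
    ext k l
    rw [Matrix.submatrix_apply]
    by_cases hkl : k = l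
    · subst hkl
      by_cases hki : k = i
      · rw [hki, Equiv.swap_apply_left, h]
      · by_cases hkj : k = j
        · rw [hkj, Equiv.swap_apply_right, h]
        · rw [Equiv.swap_apply_of_ne_of_ne hki hkj]
    · rw [hA hkl, hA ((Equiv.swap i j).injective.ne hkl)]
  · intro h
    simpa using (congrFun (congrFun h j) j)

/-- A symmetric matrix is conjugate to a diagonal one by an orthogonal matrix. -/
theorem exists_orthogonal_isDiag_symmetricConj {n : ℕ} (A : symmetricMatrices n) :
    ∃ P : Matrix (Fin n) (Fin n) ℝ, P * Pᵀ = 1 ∧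
      (symmetricConj P A : Matrix (Fin n) (Fin n) ℝ).IsDiag := by
  have hA : (A : Matrix (Fin n) (Fin n) ℝ).IsHermitian := by
    have : (A : Matrix (Fin n) (Fin n) ℝ)ᵀ = A := A.2
    rwa [Matrix.IsHermitian, Matrix.conjTranspose_eq_transpose_of_trivial]
  set U : Matrix (Fin n) (Fin n) ℝ := hA.eigenvectorUnitary.1 with hU
  have hstar : star U = Uᵀ := by
    rw [Matrix.star_eq_conjTranspose, Matrix.conjTranspose_eq_transpose_of_trivial]
  have hUU : Uᵀ * U = 1 := by
    rw [← hstar]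
    exact Unitary.coe_star_mul_self hA.eigenvectorUnitary
  refine ⟨Uᵀ, by rwa [Matrix.transpose_transpose], ?_⟩
  have hspec := hA.spectral_theorem
  rw [Unitary.conjStarAlgAut_apply, ← hU, hstar] at hspec
  have : (symmetricConj Uᵀ A : Matrix (Fin n) (Fin n) ℝ) =
      Matrix.diagonal (RCLike.ofReal ∘ hA.eigenvalues) := by
    rw [coe_symmetricConj, Matrix.transpose_transpose]
    conv_lhs => rw [hspec]
    rw [Matrix.mul_assoc, Matrix.mul_assoc, Matrix.mul_assoc, hUU, Matrix.mul_one,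
      ← Matrix.mul_assoc, hUU, Matrix.one_mul]
  rw [this]
  exact Matrix.isDiag_diagonal _

theorem charpoly_symmetricConj {n : ℕ} {P : Matrix (Fin n) (Fin n) ℝ} (hP : P * Pᵀ = 1)
    (A : symmetricMatrices n) :
    (symmetricConj P A : Matrix (Fin n) (Fin n) ℝ).charpoly =
      (A : Matrix (Fin n) (Fin n) ℝ).charpoly := by
  rw [coe_symmetricConj, Matrix.charpoly_mul_comm, ← Matrix.mul_assoc, mul_eq_one_comm.1 hP,
    Matrix.one_mul]

/-- Along the flow of a Lipschitz, `O(n)`-equivariant vector field on the space of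
symmetric matrices, the ordered multiplicities of the eigenvalues (listed in
nondecreasing order with multiplicity) are preserved. -/
theorem ordered_multiplicities_preserved_along_equivariant_flow
    (n : ℕ) (hn : 1 ≤ n)
    (X : symmetricMatrices n → symmetricMatrices n)
    (K : NNReal) (hX : LipschitzWith K X)
    (hXeq : ∀ P : Matrix (Fin n) (Fin n) ℝ, P * Pᵀ = 1 →
      ∀ A B : symmetricMatrices n, (B : Matrix (Fin n) (Fin n) ℝ) = P * (A : Matrix (Fin n) (Fin n) ℝ) * Pᵀ →
        (X B : Matrix (Fin n) (Fin n) ℝ) = P * (X A : Matrix (Fin n) (Fin n) ℝ) * Pᵀ)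
    (A : ℝ → symmetricMatrices n)
    (hA : ∀ t : ℝ, HasDerivAt A (X (A t)) t)
    (lam : ℝ → Fin n → ℝ)
    (hmono : ∀ t : ℝ, Monotone (lam t))
    (hroots : ∀ t : ℝ, (A t : Matrix (Fin n) (Fin n) ℝ).charpoly
        = ∏ i : Fin n, (Polynomial.X - Polynomial.C (lam t i))) :
    ∀ (t : ℝ) (i j : Fin n), lam t i = lam t j ↔ lam 0 i = lam 0 j := by
  have hequiv : ∀ P : Matrix (Fin n) (Fin n) ℝ, P * Pᵀ = 1 →
      ∀ B, X (symmetricConj P B) = symmetricConj P (X B) :=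
    fun P hP B => Subtype.ext (hXeq P hP B _ rfl)
  obtain ⟨P, hP, hdiag⟩ := exists_orthogonal_isDiag_symmetricConj (A 0)
  let B : ℝ → symmetricMatrices n := fun t => symmetricConj P (A t)
  have hB : ∀ t, HasDerivAt B (X (B t)) t := hasDerivAt_symmetricConj (hequiv P hP) hA
  have hBdiag (t : ℝ) : (B t : Matrix (Fin n) (Fin n) ℝ).IsDiag :=
    (isDiag_iff_forall_symmetricConj_signMatrix _).2 fun i =>
      symmetricConj_eq_of_symmetricConj_eq hX (hequiv _ (signMatrix_mul_transpose i)) hB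
        ((isDiag_iff_forall_symmetricConj_signMatrix _).1 hdiag i) t
  let b : ℝ → Fin n → ℝ := fun t => (B t : Matrix (Fin n) (Fin n) ℝ).diag
  have hb (i j : Fin n) (s t : ℝ) (h : b s i = b s j) : b t i = b t j :=
    (apply_eq_apply_iff_symmetricConj_swap (hBdiag t) i j).2
      (symmetricConj_eq_of_symmetricConj_eq hX (hequiv _ (permMatrix_mul_transpose _)) hB
        ((apply_eq_apply_iff_symmetricConj_swap (hBdiag s) i j).1 h) t)
  have hbcont (i : Fin n) : Continuous fun t => b t i :=
    (continuous_subtype_val.comp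
      (continuous_iff_continuousAt.2 fun t => (hB t).continuousAt)).matrix_elem i i
  let σ := Tuple.sort (b 0)
  have hσ (t : ℝ) : Monotone (b t ∘ σ) := fun i j hij =>
    le_of_forall_eq_imp_eq (hbcont (σ i)) (hbcont (σ j)) (hb (σ i) (σ j))
      (Tuple.monotone_sort (b 0) hij) t
  have hlam (t : ℝ) : lam t = b t ∘ σ := by
    refine (hmono t).eq_of_prod_X_sub_C_eq (hσ t) ?_
    rw [← hroots t, ← charpoly_symmetricConj hP, ← (hBdiag t).diagonal_diag,
      Matrix.charpoly_diagonal]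
    exact (Equiv.prod_comp σ fun i => Polynomial.X - Polynomial.C (b t i)).symm
  intro t i j
  rw [hlam t, hlam 0]
  exact ⟨hb (σ i) (σ j) t 0, hb (σ i) (σ j) 0 t⟩
end

section
/- Let E be a finite-dimensional real normed vector space, let τ : E → E be a continuous linear involution (τ ∘ τ = id), and let X : E → E be a Lipschitz vector field with X ∘ τ = τ ∘ X. Let x : ℝ → E satisfy x'(t) = X(x(t)) for all t ∈ ℝ. Then either x(t) lies in the fixed subspace Fix(τ) = {v ∈ E : τ v = v} for every t ∈ ℝ, or x(t) ∉ Fix(τ) for every t ∈ ℝ. (The fixed-point set of a linear symmetry is invariant in both time directions under the flow of an equivariant vector field; this is the mechanism by which, on the double of a manifold with boundary, equivariant flows preserve the boundary and the interior.) -/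
/-- The fixed-point set of a continuous linear involution is invariant in both time
directions under the flow of an equivariant Lipschitz vector field: a solution either
stays in the fixed subspace for all time, or avoids it for all time. -/
theorem fixed_subspace_invariant_under_equivariant_flow
    {E : Type*} [NormedAddCommGroup E] [NormedSpace ℝ E] [FiniteDimensional ℝ E]
    (τ : E →L[ℝ] E) (hτ : ∀ v : E, τ (τ v) = v)
    (X : E → E) (K : NNReal) (hX : LipschitzWith K X)
    (hcomm : ∀ v : E, X (τ v) = τ (X v))
    (x : ℝ → E) (hx : ∀ t : ℝ, HasDerivAt x (X (x t)) t) :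
    (∀ t : ℝ, τ (x t) = x t) ∨ (∀ t : ℝ, τ (x t) ≠ x t) := by
  have hτx (t : ℝ) : HasDerivAt (fun s => τ (x s)) (X (τ (x t))) t := by
    rw [hcomm]
    exact τ.hasFDerivAt.comp_hasDerivAt t (hx t)
  by_cases h : ∃ t₀, τ (x t₀) = x t₀
  · obtain ⟨t₀, ht₀⟩ := h
    exact Or.inl <| congrFun <| ODE_solution_unique_univ (v := fun _ => X)
      (s := fun _ => Set.univ) (fun _ => hX.lipschitzOnWith)
      (fun t => ⟨hτx t, Set.mem_univ _⟩) (fun t => ⟨hx t, Set.mem_univ _⟩) ht₀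
  · exact Or.inr (not_exists.mp h)
end
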